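/- Assume that M and the quotient M/Σ_I for every subset I ⊆ {1,…,n} are projective R-modules, and that the collection M_1,…,M_n is distributive. Then for every I ⊆ {1,…,n} there is an isomorphism of R-modules (L^I of the collection M_1,…,M_n)^* ≅ L^{{1,…,n}∖I} of the collection M_1^∨,…,M_n^∨ of submodules of M^*; explicitly, Hom_R( Π_{{1,…,n}∖I}/(Π_{{1,…,n}∖I} ∩ Σ_I), R ) ≅ (⋂_{i∈I} M_i^∨)/( (⋂_{i∈I} M_i^∨) ∩ ∑_{i∉I} M_i^∨ ). -/

import Mathlib

/-!
STATEMENT 2: if `M` and all quotients `M/Σ_I` are projective and the collection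
`M_1, …, M_n` is distributive, then for every `I ⊆ {1,…,n}` there is an isomorphism of
`R`-modules `(L^I)^* ≅ L'^{{1,…,n}∖I}`, where `L^I = Π_{Iᶜ}/(Π_{Iᶜ} ∩ Σ_I)` for the
collection `M_1, …, M_n` and `L'` is formed from the collection `M_1^∨, …, M_n^∨` of
submodules of `M^*`; explicitly,
`Hom_R(Π_{Iᶜ}/(Π_{Iᶜ} ∩ Σ_I), R) ≅ (⋂_{i∈I} M_i^∨)/((⋂_{i∈I} M_i^∨) ∩ ∑_{i∉I} M_i^∨)`.
-/

variable {R M : Type*} [CommRing R] [AddCommGroup M] [Module R M]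

/-- `Σ_I = ∑_{i ∈ I} M_i` (with `Σ_∅ = 0`). -/
abbrev sigmaSub {n : ℕ} {M : Type*} [AddCommGroup M] [Module R M]
    (Mf : Fin n → Submodule R M) (I : Finset (Fin n)) : Submodule R M :=
  I.sup Mf

/-- `Π_I = ⋂_{i ∈ I} M_i` (with `Π_∅ = M`). -/
abbrev piSub {n : ℕ} {M : Type*} [AddCommGroup M] [Module R M]
    (Mf : Fin n → Submodule R M) (I : Finset (Fin n)) : Submodule R M :=
  I.inf Mf

/-- The collection `M_1, …, M_n` is distributive if the sublattice of the lattice of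
`R`-submodules of `M` generated by `{M_1, …, M_n}` under `+` (= `⊔`) and `∩` (= `⊓`)
is a distributive lattice. -/
def IsDistributiveFamily {n : ℕ} (Mf : Fin n → Submodule R M) : Prop :=
  ∀ a ∈ latticeClosure (Set.range Mf), ∀ b ∈ latticeClosure (Set.range Mf),
    ∀ c ∈ latticeClosure (Set.range Mf), a ⊓ (b ⊔ c) = (a ⊓ b) ⊔ (a ⊓ c)

/-- `L^I = Π_{{1,…,n}∖I} / (Π_{{1,…,n}∖I} ∩ Σ_I)`. -/
abbrev subquotL {n : ℕ} {M : Type*} [AddCommGroup M] [Module R M]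
    (Mf : Fin n → Submodule R M) (I : Finset (Fin n)) : Type _ :=
  ↥(piSub Mf Iᶜ) ⧸ Submodule.comap (piSub Mf Iᶜ).subtype (sigmaSub Mf I)

/-!
Write `N^∨` for the dual annihilator of `N`. Restricting functionals from `M` to `P` maps `S^∨` to
the dual of `P / (P ∩ S)`, with kernel `S^∨ ∩ P^∨`, and it is surjective as soon as `M / (P + S)` is
projective: a functional on `P` vanishing on `P ∩ S` extends by zero to `P + S`, which is then a
direct summand of `M`. With `P = Π_J` and `S = Σ_I` it remains to see that `M / (Σ_I + Π_J)` is
projective and that `Π_J^∨ = ∑_{j ∈ J} M_j^∨`.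

For the first, `M / (A ∩ B)` is the kernel of the surjection `M / A × M / B → M / (A + B)`, so it is
projective when the other three quotients are. Distributivity gives
`Σ_I + Π_{J ∪ {j}} = (Σ_I + M_j) ∩ (Σ_I + Π_J)`, and the sum of the two terms on the right is
`Σ_{I ∪ {j}} + Π_J`, so one inducts on `J`. For the second, the same extension argument shows
`(A ∩ B)^∨ = A^∨ + B^∨` when `M / (A + B)` is projective.
-/

section Extension

variable {R M N : Type*} [Ring R] [AddCommGroup M] [Module R M] [AddCommGroup N] [Module R N]

theorem exists_extend_of_projective_quotient (p : Submodule R M) [Module.Projective R (M ⧸ p)]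
    (f : p →ₗ[R] N) : ∃ g : M →ₗ[R] N, g ∘ₗ p.subtype = f := by
  have mkQ_splits : ∃ s, p.mkQ ∘ₗ s = LinearMap.id :=
    p.mkQ.exists_rightInverse_of_surjective p.range_mkQ
  obtain ⟨retraction, h_retraction⟩ := ((LinearMap.exact_subtype_mkQ p).split_tfae
    p.injective_subtype p.mkQ_surjective |>.out 0 1).1 mkQ_splits
  exact ⟨f ∘ₗ retraction, by rw [LinearMap.comp_assoc, h_retraction, LinearMap.comp_id]⟩

theorem exists_extend_eq_zero_of_projective_quotient_sup (A B : Submodule R M)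
    [Module.Projective R (M ⧸ (A ⊔ B))] (f : A →ₗ[R] N) (hf : ∀ x : A, (x : M) ∈ B → f x = 0) :
    ∃ g : M →ₗ[R] N, (∀ x : A, g x = f x) ∧ ∀ x ∈ B, g x = 0 := by
  let fA : M →ₗ.[R] N := ⟨A, f⟩
  let zeroB : M →ₗ.[R] N := ⟨B, 0⟩
  have agree (x : fA.domain) (y : zeroB.domain) (hxy : (x : M) = y) : fA x = zeroB y :=
    hf x (hxy ▸ y.2)
  obtain ⟨g, hg⟩ := exists_extend_of_projective_quotient (A ⊔ B) (fA.sup zeroB agree).toFun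
  refine ⟨g, fun x => ?_, fun x hx => ?_⟩
  · exact (LinearMap.congr_fun hg ⟨x, Submodule.mem_sup_left x.2⟩).trans
      ((LinearPMap.left_le_sup fA zeroB agree).2 rfl).symm
  · exact (LinearMap.congr_fun hg ⟨x, Submodule.mem_sup_right hx⟩).trans
      ((LinearPMap.right_le_sup fA zeroB agree).2 (x := ⟨x, hx⟩) rfl).symm

end Extension

section MayerVietoris

variable {R M N P : Type*} [Ring R] [AddCommGroup M] [Module R M] [AddCommGroup N] [Module R N]
  [AddCommGroup P] [Module R P]

theorem projective_of_exact {f : M →ₗ[R] N} {g : N →ₗ[R] P} [Module.Projective R N]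
    [Module.Projective R P] (hfg : Function.Exact f g) (hf : Function.Injective f)
    (hg : Function.Surjective g) : Module.Projective R M := by
  obtain ⟨retraction, h_retraction⟩ := (hfg.split_tfae hf hg |>.out 0 1).1
    (g.exists_rightInverse_of_surjective (LinearMap.range_eq_top.2 hg))
  exact .of_split f retraction h_retraction

/-- The map `M / (A ∩ B) → M / A × M / B` of the Mayer–Vietoris sequence. -/
def quotientInfToProd (A B : Submodule R M) : M ⧸ (A ⊓ B) →ₗ[R] (M ⧸ A) × (M ⧸ B) :=
  (Submodule.factor inf_le_left).prod (Submodule.factor inf_le_right)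

/-- The difference map `M / A × M / B → M / (A + B)`, `(x, y) ↦ x - y`, of the Mayer–Vietoris
sequence. -/
def prodToQuotientSup (A B : Submodule R M) : (M ⧸ A) × (M ⧸ B) →ₗ[R] M ⧸ (A ⊔ B) :=
  (Submodule.factor le_sup_left).coprod (-Submodule.factor le_sup_right)

theorem quotientInfToProd_injective (A B : Submodule R M) :
    Function.Injective (quotientInfToProd A B) := by
  rw [← LinearMap.ker_eq_bot, LinearMap.ker_eq_bot']
  intro x hx
  obtain ⟨x, rfl⟩ := Submodule.mkQ_surjective _ x
  simpa [quotientInfToProd] using hx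

theorem prodToQuotientSup_surjective (A B : Submodule R M) :
    Function.Surjective (prodToQuotientSup A B) := fun z => by
  obtain ⟨z, rfl⟩ := Submodule.mkQ_surjective _ z
  exact ⟨(A.mkQ z, 0), by simp [prodToQuotientSup]⟩

theorem exact_quotientInfToProd_prodToQuotientSup (A B : Submodule R M) :
    Function.Exact (quotientInfToProd A B) (prodToQuotientSup A B) := by
  refine LinearMap.exact_of_comp_of_mem_range ?_ ?_
  · ext x
    simp [quotientInfToProd, prodToQuotientSup]
  rintro ⟨x, y⟩ hxy
  obtain ⟨x, rfl⟩ := Submodule.mkQ_surjective _ x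
  obtain ⟨y, rfl⟩ := Submodule.mkQ_surjective _ y
  have sub_mem_sup : x - y ∈ A ⊔ B := by
    rw [← Submodule.Quotient.mk_eq_zero]
    simpa [prodToQuotientSup, sub_eq_add_neg] using hxy
  obtain ⟨a, ha, b, hb, hab⟩ := Submodule.mem_sup.1 sub_mem_sup
  refine ⟨(A ⊓ B).mkQ (x - a), Prod.ext ?_ ?_⟩
  · exact (Submodule.Quotient.eq A).2 (by simpa using ha)
  · refine (Submodule.Quotient.eq B).2 ?_
    rwa [LinearMap.id_apply, sub_right_comm, ← hab, add_sub_cancel_left]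

theorem projective_quotient_inf (A B : Submodule R M) [Module.Projective R (M ⧸ A)]
    [Module.Projective R (M ⧸ B)] [Module.Projective R (M ⧸ (A ⊔ B))] :
    Module.Projective R (M ⧸ (A ⊓ B)) :=
  projective_of_exact (exact_quotientInfToProd_prodToQuotientSup A B)
    (quotientInfToProd_injective A B) (prodToQuotientSup_surjective A B)

end MayerVietoris

theorem dualAnnihilator_inf_of_projective_quotient_sup (A B : Submodule R M)
    [Module.Projective R (M ⧸ (A ⊔ B))] :
    (A ⊓ B).dualAnnihilator = A.dualAnnihilator ⊔ B.dualAnnihilator := by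
  refine le_antisymm (fun f hf => ?_) (Submodule.sup_dualAnnihilator_le_inf A B)
  rw [Submodule.mem_dualAnnihilator] at hf
  obtain ⟨g, hgA, hgB⟩ := exists_extend_eq_zero_of_projective_quotient_sup A B (f.domRestrict A)
    fun x hx => hf x ⟨x.2, hx⟩
  have sub_mem : f - g ∈ A.dualAnnihilator :=
    (Submodule.mem_dualAnnihilator _).2 fun x hx => by simp [hgA ⟨x, hx⟩]
  have mem : g ∈ B.dualAnnihilator := (Submodule.mem_dualAnnihilator g).2 hgB
  exact Submodule.mem_sup.2 ⟨f - g, sub_mem, g, mem, sub_add_cancel f g⟩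

theorem dualAnnihilator_finset_sup {ι : Type*} (F : ι → Submodule R M) (I : Finset ι) :
    (I.sup F).dualAnnihilator = I.inf fun i => (F i).dualAnnihilator := by
  rw [Finset.sup_eq_iSup, Finset.inf_eq_iInf]
  simp only [Submodule.dualAnnihilator_iSup_eq]

/-- The subquotient `P / (P ∩ S)` of `M`. -/
abbrev Subquotient {R M : Type*} [Ring R] [AddCommGroup M] [Module R M] (P S : Submodule R M) :
    Type _ :=
  P ⧸ S.comap P.subtype

namespace Subquotient

variable (P S : Submodule R M)

/-- Restriction to `P` of functionals on `M` vanishing on `S`, as functionals on `P / (P ∩ S)`. -/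
def restrictDual : S.dualAnnihilator →ₗ[R] Module.Dual R (Subquotient P S) :=
  ((S.comap P.subtype).mapQ S P.subtype le_rfl).dualMap ∘ₗ
    S.dualQuotEquivDualAnnihilator.symm.toLinearMap

theorem restrictDual_apply_mk (f : S.dualAnnihilator) (x : P) :
    restrictDual P S f (Submodule.Quotient.mk x) = f.1 x :=
  rfl

theorem ker_restrictDual :
    LinearMap.ker (restrictDual P S) = P.dualAnnihilator.comap S.dualAnnihilator.subtype := by
  ext f
  rw [LinearMap.mem_ker, Submodule.mem_comap, Submodule.mem_dualAnnihilator]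
  refine ⟨fun hf x hx => ?_, fun hf => ?_⟩
  · exact (restrictDual_apply_mk P S f ⟨x, hx⟩).symm.trans (LinearMap.congr_fun hf _)
  · ext x
    exact (restrictDual_apply_mk P S f x).trans (hf x x.2)

theorem restrictDual_surjective [Module.Projective R (M ⧸ (P ⊔ S))] :
    Function.Surjective (restrictDual P S) := fun φ => by
  obtain ⟨g, hgP, hgS⟩ := exists_extend_eq_zero_of_projective_quotient_sup P S
    (φ ∘ₗ (S.comap P.subtype).mkQ) fun x hx => by
      rw [LinearMap.comp_apply, Submodule.mkQ_apply,
        (Submodule.Quotient.mk_eq_zero (S.comap P.subtype)).2 hx, map_zero]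
  refine ⟨⟨g, (Submodule.mem_dualAnnihilator g).2 hgS⟩, ?_⟩
  ext x
  exact (restrictDual_apply_mk P S _ x).trans (hgP x)

/-- The dual of `P / (P ∩ S)` is `S^∨ / (S^∨ ∩ P^∨)`, through restriction of functionals to `P`. -/
noncomputable def dualEquiv [Module.Projective R (M ⧸ (P ⊔ S))] :
    Module.Dual R (Subquotient P S) ≃ₗ[R] Subquotient S.dualAnnihilator P.dualAnnihilator :=
  ((Submodule.quotEquivOfEq _ _ (ker_restrictDual P S)).symm.trans
    ((restrictDual P S).quotKerEquivOfSurjective (restrictDual_surjective P S))).symm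

end Subquotient

/-- The sublattice generated by `s` is distributive. On the range of a family of submodules this is
`IsDistributiveFamily`, for an arbitrary index type. -/
def GeneratesDistributive {α : Type*} [Lattice α] (s : Set α) : Prop :=
  ∀ a ∈ latticeClosure s, ∀ b ∈ latticeClosure s, ∀ c ∈ latticeClosure s,
    a ⊓ (b ⊔ c) = (a ⊓ b) ⊔ (a ⊓ c)

namespace GeneratesDistributive

section Lattice

variable {α : Type*} [Lattice α]

theorem sup_inf_left {s : Set α} (h : GeneratesDistributive s) {a b c : α}
    (ha : a ∈ latticeClosure s) (hb : b ∈ latticeClosure s) (hc : c ∈ latticeClosure s) :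
    a ⊔ (b ⊓ c) = (a ⊔ b) ⊓ (a ⊔ c) := by
  let L : Sublattice α :=
    ⟨latticeClosure s, isSublattice_latticeClosure.supClosed, isSublattice_latticeClosure.infClosed⟩
  let _ : DistribLattice L := .ofInfSupLe fun a b c => (h a a.2 b b.2 c c.2).le
  exact congrArg Subtype.val (_root_.sup_inf_left (⟨a, ha⟩ : L) ⟨b, hb⟩ ⟨c, hc⟩)

theorem finset_sup_sup_inf_finset_inf [BoundedOrder α] {ι : Type*} {F : ι → α}
    (h : GeneratesDistributive (Set.range F)) (I J : Finset ι) (j : ι) :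
    I.sup F ⊔ (F j ⊓ J.inf F) = (I.sup F ⊔ F j) ⊓ (I.sup F ⊔ J.inf F) := by
  rcases I.eq_empty_or_nonempty with rfl | hI
  · simp
  rcases J.eq_empty_or_nonempty with rfl | hJ
  · simp
  have mem (i : ι) : F i ∈ latticeClosure (Set.range F) := subset_latticeClosure ⟨i, rfl⟩
  exact h.sup_inf_left
    (isSublattice_latticeClosure.supClosed.finsetSup_mem hI fun i _ => mem i) (mem j)
    (isSublattice_latticeClosure.infClosed.finsetInf_mem hJ fun i _ => mem i)

end Lattice

theorem projective_quotient_finset_sup_sup_finset_inf {R M ι : Type*} [Ring R] [AddCommGroup M]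
    [Module R M] {F : ι → Submodule R M} (h : GeneratesDistributive (Set.range F))
    (hQ : ∀ I : Finset ι, Module.Projective R (M ⧸ I.sup F)) (I J : Finset ι) :
    Module.Projective R (M ⧸ (I.sup F ⊔ J.inf F)) := by
  classical
  induction J using Finset.induction_on generalizing I with
  | empty =>
    have : Subsingleton (M ⧸ (I.sup F ⊔ (∅ : Finset ι).inf F)) :=
      Submodule.Quotient.subsingleton_iff.2 (by simp)
    infer_instance
  | insert j J _ ih =>
    have sup_insert : (insert j I).sup F = I.sup F ⊔ F j := by rw [Finset.sup_insert, sup_comm]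
    have : Module.Projective R (M ⧸ (I.sup F ⊔ F j)) := sup_insert ▸ hQ (insert j I)
    have : Module.Projective R (M ⧸ (I.sup F ⊔ J.inf F)) := ih I
    have : Module.Projective R (M ⧸ (I.sup F ⊔ F j ⊔ (I.sup F ⊔ J.inf F))) := by
      rw [← sup_sup_distrib_left, ← sup_assoc, ← sup_insert]
      exact ih (insert j I)
    rw [Finset.inf_insert, h.finset_sup_sup_inf_finset_inf]
    exact projective_quotient_inf _ _

theorem dualAnnihilator_finset_inf {ι : Type*} {F : ι → Submodule R M}
    (h : GeneratesDistributive (Set.range F))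
    (hQ : ∀ I : Finset ι, Module.Projective R (M ⧸ I.sup F)) (J : Finset ι) :
    (J.inf F).dualAnnihilator = J.sup fun i => (F i).dualAnnihilator := by
  classical
  induction J using Finset.induction_on with
  | empty => simp
  | insert j J _ ih =>
    have : Module.Projective R (M ⧸ (F j ⊔ J.inf F)) := by
      rw [← Finset.sup_singleton (f := F) (b := j)]
      exact h.projective_quotient_finset_sup_sup_finset_inf hQ {j} J
    rw [Finset.inf_insert, Finset.sup_insert, dualAnnihilator_inf_of_projective_quotient_sup, ih]

end GeneratesDistributive

theorem statement2_general {ι : Type*} {F : ι → Submodule R M}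
    (h : GeneratesDistributive (Set.range F))
    (hQ : ∀ I : Finset ι, Module.Projective R (M ⧸ I.sup F)) (I J : Finset ι) :
    Nonempty (Module.Dual R (Subquotient (J.inf F) (I.sup F)) ≃ₗ[R]
      Subquotient (I.inf fun i => (F i).dualAnnihilator)
        (J.sup fun i => (F i).dualAnnihilator)) := by
  have : Module.Projective R (M ⧸ (J.inf F ⊔ I.sup F)) := by
    rw [sup_comm]
    exact h.projective_quotient_finset_sup_sup_finset_inf hQ I J
  rw [← dualAnnihilator_finset_sup, ← h.dualAnnihilator_finset_inf hQ]
  exact ⟨Subquotient.dualEquiv (J.inf F) (I.sup F)⟩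

theorem statement2 {n : ℕ} (hn : 1 ≤ n) (Mf : Fin n → Submodule R M)
    (hM : Module.Projective R M)
    (hQ : ∀ I : Finset (Fin n), Module.Projective R (M ⧸ sigmaSub Mf I))
    (hdist : IsDistributiveFamily Mf) :
    ∀ I : Finset (Fin n),
      Nonempty (Module.Dual R (subquotL Mf I) ≃ₗ[R]
        subquotL (fun i => (Mf i).dualAnnihilator) Iᶜ) := by
  intro I
  unfold subquotL
  rw [compl_compl]
  exact statement2_general hdist hQ I Iᶜ
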